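/- Let n ≥ 1, m ≥ 2, p > 1, and let u = (u_1,…,u_m) be an m-tuple of C² functions u_i : ℝⁿ → ℝ solving the p-Laplacian system −div(|∇u_i|^{p−2}∇u_i) = H_i(u) on ℝⁿ for every i, and suppose H̃(u(x)) ≤ 0 for all x ∈ ℝⁿ. Then for every α ≥ p the function I_α(r) := r^{α−n} ∫_{B_r} [ ∑_{i=1}^m (2/p)|∇u_i|^p − 2H̃(u) ] dx is nondecreasing in r on (0,∞). -/

import Mathlib

open MeasureTheory Metric Finset Filter
open scoped RealInnerProductSpace

noncomputable section

/-- Divergence of a vector field on Euclidean space. -/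
def vdiv {n : ℕ} (F : EuclideanSpace ℝ (Fin n) → EuclideanSpace ℝ (Fin n))
    (x : EuclideanSpace ℝ (Fin n)) : ℝ :=
  ∑ i, fderiv ℝ F x (EuclideanSpace.single i 1) i

/-! The Pohozaev field `V = ∑ ⟨∇uᵢ, x⟩ |∇uᵢ|^{p-2} ∇uᵢ` points outward, `⟨x, V⟩ ≥ 0`, so its
divergence has nonnegative integral over every ball `B_r`. With `e = ∑ (2/p) |∇uᵢ|^p - 2 H̃(u)`, the
system gives `2 div V = p e + ⟨∇e, x⟩ + 2 p H̃(u) ≤ α e + ⟨∇e, x⟩`, because `e ≥ 0` and `H̃(u) ≤ 0`.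
After rescaling `B_r` to the unit ball, the integral of the right-hand side is `I_α'(r)` up to a
positive factor.

For `p < 2` the flux `|∇u|^{p-2} ∇u` may fail to be differentiable at critical points of `u`, but
the terms of `V` are quadratic in `∇u` times `|∇u|^{p-2}`, and such products are `C¹` if `p > 1`. -/

open Module (finrank)
open scoped ContDiff Gradient Topology

section Divergence

variable {E : Type*} [NormedAddCommGroup E] [NormedSpace ℝ E]

/-- The divergence of a vector field, encoded as the trace of its derivative so that it makes sense
on any finite-dimensional real normed space, without coordinates. -/
def divergence (V : E → E) (x : E) : ℝ :=
  LinearMap.trace ℝ E (fderiv ℝ V x)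

theorem vdiv_eq_divergence {n : ℕ} (F : EuclideanSpace ℝ (Fin n) → EuclideanSpace ℝ (Fin n))
    (x : EuclideanSpace ℝ (Fin n)) : vdiv F x = divergence F x := by
  rw [divergence, LinearMap.trace_eq_sum_inner _ (EuclideanSpace.basisFun (Fin n) ℝ), vdiv]
  simp [EuclideanSpace.inner_single_left]

theorem divergence_fun_sum {ι : Type*} {s : Finset ι} {V : ι → E → E} {x : E}
    (hV : ∀ i ∈ s, DifferentiableAt ℝ (V i) x) :
    divergence (fun y => ∑ i ∈ s, V i y) x = ∑ i ∈ s, divergence (V i) x := by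
  simp only [divergence, fderiv_fun_sum hV, ContinuousLinearMap.toLinearMap_sum, map_sum]

variable [FiniteDimensional ℝ E] {V : E → E}

theorem divergence_fun_smul {φ : E → ℝ} {x : E} (hφ : DifferentiableAt ℝ φ x)
    (hV : DifferentiableAt ℝ V x) :
    divergence (fun y => φ y • V y) x = φ x * divergence V x + fderiv ℝ φ x (V x) := by
  simp only [divergence, fderiv_fun_smul hφ hV, ContinuousLinearMap.toLinearMap_add,
    ContinuousLinearMap.toLinearMap_smul, map_add, map_smul, smul_eq_mul]
  congr 1
  exact LinearMap.trace_smulRight (fderiv ℝ φ x).toLinearMap (V x)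

theorem continuous_divergence (hV : ContDiff ℝ 1 V) : Continuous (divergence V) :=
  ((LinearMap.trace ℝ E ∘ₗ ContinuousLinearMap.coeLM ℝ).continuous_of_finiteDimensional).comp
    (hV.continuous_fderiv one_ne_zero)

variable [MeasurableSpace E] [BorelSpace E] {μ : Measure E} [μ.IsAddHaarMeasure]

theorem integral_fderiv_apply_eq_zero {f : E → ℝ} (hf : ContDiff ℝ 1 f)
    (hfs : HasCompactSupport f) (v : E) : ∫ x, fderiv ℝ f x v ∂μ = 0 := by
  have hf' : Integrable (fun x => fderiv ℝ f x v) μ :=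
    ((hf.continuous_fderiv one_ne_zero).clm_apply
      continuous_const).integrable_of_hasCompactSupport (hfs.fderiv_apply (𝕜 := ℝ) v)
  have hparts := integral_mul_fderiv_eq_neg_fderiv_mul_of_integrable (μ := μ)
    (f := fun _ : E => (1 : ℝ)) (g := f) (v := v) (by simp) (by simpa using hf')
    (by simpa using hf.continuous.integrable_of_hasCompactSupport hfs)
    (fun _ _ => differentiableAt_const _) (fun x _ => hf.differentiable one_ne_zero x)
  simpa using hparts

theorem integral_divergence_eq_zero (hV : ContDiff ℝ 1 V) (hVs : HasCompactSupport V) :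
    ∫ x, divergence V x ∂μ = 0 := by
  let b := Module.finBasis ℝ E
  let c i : E →L[ℝ] ℝ := (b.coord i).toContinuousLinearMap
  have hc i : ContDiff ℝ 1 (c i ∘ V) := (c i).contDiff.comp hV
  have hcs i : HasCompactSupport (c i ∘ V) := hVs.comp_left (map_zero _)
  have hdiv x : divergence V x = ∑ i, fderiv ℝ (c i ∘ V) x (b i) := by
    rw [divergence, LinearMap.trace_eq_matrix_trace ℝ b, Matrix.trace]
    refine sum_congr rfl fun i _ => ?_
    rw [((c i).hasFDerivAt.comp x (hV.differentiable one_ne_zero x).hasFDerivAt).fderiv,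
      Matrix.diag_apply, LinearMap.toMatrix_apply]
    rfl
  simp_rw [hdiv]
  rw [integral_finsetSum]
  · exact sum_eq_zero fun i _ => integral_fderiv_apply_eq_zero (hc i) (hcs i) _
  · exact fun i _ => (((hc i).continuous_fderiv one_ne_zero).clm_apply
      continuous_const).integrable_of_hasCompactSupport ((hcs i).fderiv_apply (𝕜 := ℝ) _)

end Divergence

theorem integrableOn_ball_of_continuous {X F : Type*} [MetricSpace X] [ProperSpace X]
    [MeasurableSpace X] [OpensMeasurableSpace X] [NormedAddCommGroup F] {μ : Measure X}
    [IsFiniteMeasureOnCompacts μ] {f : X → F} (hf : Continuous f) (x : X) (r : ℝ) :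
    IntegrableOn f (ball x r) μ :=
  (hf.continuousOn.integrableOn_compact (isCompact_closedBall x r)).mono_set ball_subset_closedBall

section BallCutoff

variable {E : Type*} [NormedAddCommGroup E] {r k : ℝ} {x : E}

/-- A smooth function vanishing outside the ball of radius `r` about the origin; it is radially
nonincreasing for `0 ≤ k` and tends to the indicator function of the ball as `k → ∞`. -/
def ballCutoff (r k : ℝ) (x : E) : ℝ :=
  Real.smoothTransition (k * (r ^ 2 - ‖x‖ ^ 2))

theorem ballCutoff_eq_zero (hr : 0 ≤ r) (hk : 0 ≤ k) (hx : x ∉ ball 0 r) :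
    ballCutoff r k x = 0 := by
  refine Real.smoothTransition.zero_of_nonpos (mul_nonpos_of_nonneg_of_nonpos hk ?_)
  have hrx : r ≤ ‖x‖ := by simpa using hx
  exact sub_nonpos.2 (pow_le_pow_left₀ hr hrx 2)

theorem norm_ballCutoff_le_one : ‖ballCutoff r k x‖ ≤ 1 := by
  rw [ballCutoff, Real.norm_of_nonneg (Real.smoothTransition.nonneg _)]
  exact Real.smoothTransition.le_one _

theorem hasCompactSupport_ballCutoff [ProperSpace E] (hr : 0 ≤ r) (hk : 0 ≤ k) :
    HasCompactSupport (ballCutoff r k : E → ℝ) :=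
  HasCompactSupport.intro (isCompact_closedBall 0 r) fun _ hx =>
    ballCutoff_eq_zero hr hk fun h => hx (ball_subset_closedBall h)

theorem tendsto_ballCutoff_one (hx : x ∈ ball 0 r) :
    Tendsto (fun k => ballCutoff r k x) atTop (𝓝 1) := by
  have hxr : 0 < r ^ 2 - ‖x‖ ^ 2 :=
    sub_pos.2 (pow_lt_pow_left₀ (by simpa using hx) (norm_nonneg x) two_ne_zero)
  refine tendsto_const_nhds.congr' ?_
  filter_upwards [(tendsto_id.atTop_mul_const hxr).eventually_ge_atTop 1] with k hk
  exact (Real.smoothTransition.one_of_one_le hk).symm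

theorem continuous_ballCutoff : Continuous (ballCutoff r k : E → ℝ) :=
  Real.smoothTransition.continuous.comp (by fun_prop)

theorem tendsto_integral_ballCutoff_mul [MeasurableSpace E] [BorelSpace E] {μ : Measure E}
    {f : E → ℝ} (hr : 0 ≤ r) (hf : IntegrableOn f (ball 0 r) μ) :
    Tendsto (fun k => ∫ x, ballCutoff r k x * f x ∂μ) atTop (𝓝 (∫ x in ball 0 r, f x ∂μ)) := by
  have hball : Tendsto (fun k => ∫ x in ball 0 r, ballCutoff r k x * f x ∂μ) atTop
      (𝓝 (∫ x in ball 0 r, f x ∂μ)) := by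
    refine tendsto_integral_filter_of_dominated_convergence (fun x => ‖f x‖)
      (.of_forall fun k => continuous_ballCutoff.aestronglyMeasurable.mul
        hf.aestronglyMeasurable) ?_ hf.norm ?_
    · refine .of_forall fun k => .of_forall fun x => ?_
      rw [norm_mul]
      exact mul_le_of_le_one_left (norm_nonneg _) norm_ballCutoff_le_one
    · filter_upwards [ae_restrict_mem measurableSet_ball] with x hx
      simpa using (tendsto_ballCutoff_one hx).mul_const (f x)
  refine hball.congr' ?_
  filter_upwards [eventually_ge_atTop 0] with k hk
  exact setIntegral_eq_integral_of_forall_compl_eq_zero fun x hx => by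
    rw [ballCutoff_eq_zero hr hk hx, zero_mul]

variable [InnerProductSpace ℝ E]

theorem contDiff_ballCutoff : ContDiff ℝ 1 (ballCutoff r k : E → ℝ) :=
  Real.smoothTransition.contDiff.comp
    (contDiff_const.mul (contDiff_const.sub (contDiff_norm_sq ℝ)))

theorem fderiv_ballCutoff_apply_nonpos {v : E} (hk : 0 ≤ k) (hv : 0 ≤ ⟪x, v⟫) :
    fderiv ℝ (ballCutoff r k) x v ≤ 0 := by
  have hinner := ((hasStrictFDerivAt_norm_sq x).hasFDerivAt.const_sub (r ^ 2)).const_mul k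
  have houter : DifferentiableAt ℝ Real.smoothTransition (k * (r ^ 2 - ‖x‖ ^ 2)) :=
    (Real.smoothTransition.contDiff (n := 1)).differentiable one_ne_zero _
  have hderiv : HasFDerivAt (ballCutoff r k) _ x := houter.hasDerivAt.comp_hasFDerivAt x hinner
  have hmono : 0 ≤ deriv Real.smoothTransition (k * (r ^ 2 - ‖x‖ ^ 2)) :=
    Real.smoothTransition.monotone.deriv_nonneg
  rw [hderiv.fderiv]
  simp only [smul_apply, neg_apply, coe_innerSL_apply, smul_eq_mul, nsmul_eq_mul, Nat.cast_ofNat]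
  nlinarith [mul_nonneg hmono (mul_nonneg hk hv)]

theorem setIntegral_divergence_ball_nonneg [FiniteDimensional ℝ E] [MeasurableSpace E]
    [BorelSpace E] {μ : Measure E} [μ.IsAddHaarMeasure] {V : E → E} (hV : ContDiff ℝ 1 V)
    (hout : ∀ x, 0 ≤ ⟪x, V x⟫) (hr : 0 ≤ r) :
    0 ≤ ∫ x in ball 0 r, divergence V x ∂μ := by
  have hdiv : Continuous (divergence V) := continuous_divergence hV
  -- With a cutoff `φ` in place of the indicator function, `∫ φ div V = -∫ Dφ(V) ≥ 0`.
  refine ge_of_tendsto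
    (tendsto_integral_ballCutoff_mul hr (integrableOn_ball_of_continuous hdiv 0 r)) ?_
  filter_upwards [eventually_ge_atTop 0] with k hk
  set φ : E → ℝ := ballCutoff r k
  have hφ : ContDiff ℝ 1 φ := contDiff_ballCutoff
  have hφs : HasCompactSupport φ := hasCompactSupport_ballCutoff hr hk
  have hint : Integrable (fun x => φ x * divergence V x) μ :=
    (hφ.continuous.mul hdiv).integrable_of_hasCompactSupport hφs.mul_right
  have hint' : Integrable (fun x => fderiv ℝ φ x (V x)) μ := by
    refine ((hφ.continuous_fderiv one_ne_zero).clm_apply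
      hV.continuous).integrable_of_hasCompactSupport ((hφs.fderiv (𝕜 := ℝ)).mono ?_)
    exact fun x hx h => hx (by simp [h])
  have hparts : ∫ x, φ x * divergence V x ∂μ + ∫ x, fderiv ℝ φ x (V x) ∂μ = 0 := by
    rw [← integral_add hint hint',
      ← integral_divergence_eq_zero (μ := μ) (hφ.smul hV) hφs.smul_right]
    exact integral_congr_ae (.of_forall fun x => (divergence_fun_smul
      (hφ.differentiable one_ne_zero x) (hV.differentiable one_ne_zero x)).symm)
  have hsign : ∫ x, fderiv ℝ φ x (V x) ∂μ ≤ 0 :=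
    integral_nonpos fun x => fderiv_ballCutoff_apply_nonpos hk (hout x)
  linarith

end BallCutoff

section Dilation

variable {E : Type*} [NormedAddCommGroup E] [NormedSpace ℝ E] [FiniteDimensional ℝ E]
  [MeasurableSpace E] [BorelSpace E] {μ : Measure E}

theorem setIntegral_ball_eq_pow_smul {F : Type*} [NormedAddCommGroup F] [NormedSpace ℝ F]
    [μ.IsAddHaarMeasure] (f : E → F) {r : ℝ} (hr : 0 < r) :
    ∫ x in ball 0 r, f x ∂μ = r ^ finrank ℝ E • ∫ x in ball 0 1, f (r • x) ∂μ := by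
  rw [Measure.setIntegral_comp_smul_of_pos μ f _ hr, smul_inv_smul₀ (by positivity),
    smul_unitBall_of_pos hr]

theorem hasDerivAt_setIntegral_ball_comp_smul {F : Type*} [NormedAddCommGroup F] [NormedSpace ℝ F]
    [IsFiniteMeasureOnCompacts μ] {f : E → F} (hf : ContDiff ℝ 1 f) (r t : ℝ) :
    HasDerivAt (fun s : ℝ => ∫ x in ball 0 r, f (s • x) ∂μ)
      (∫ x in ball 0 r, fderiv ℝ f (t • x) x ∂μ) t := by
  have hf' : Continuous fun q : ℝ × E => fderiv ℝ f (q.1 • q.2) q.2 :=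
    ((hf.continuous_fderiv one_ne_zero).comp (by fun_prop)).clm_apply continuous_snd
  obtain ⟨C, hC⟩ := ((isCompact_closedBall t 1).prod
    (isCompact_closedBall (0 : E) r)).exists_bound_of_continuousOn hf'.continuousOn
  refine (hasDerivAt_integral_of_dominated_loc_of_deriv_le (s := ball t 1)
    (F' := fun s x => fderiv ℝ f (s • x) x) (bound := fun _ => C) (ball_mem_nhds t one_pos)
    (.of_forall fun s => (hf.continuous.comp (continuous_const_smul s)).aestronglyMeasurable)
    (integrableOn_ball_of_continuous (hf.continuous.comp (continuous_const_smul t)) 0 r)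
    (hf'.comp (by fun_prop : Continuous fun x : E => (t, x))).aestronglyMeasurable
    ?_ (integrableOn_ball_of_continuous continuous_const 0 r) (.of_forall fun x s _ => ?_)).2
  · filter_upwards [ae_restrict_mem measurableSet_ball] with x hx s hs
    exact hC (s, x) ⟨ball_subset_closedBall hs, ball_subset_closedBall hx⟩
  · have hsmul : HasDerivAt (fun s : ℝ => s • x) x s := by
      simpa using (hasDerivAt_id s).smul_const x
    exact (hf.differentiable one_ne_zero (s • x)).hasFDerivAt.comp_hasDerivAt s hsmul

theorem monotoneOn_rpow_mul_setIntegral_ball [μ.IsAddHaarMeasure] {f : E → ℝ}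
    (hf : ContDiff ℝ 1 f) {a : ℝ}
    (hnonneg : ∀ r : ℝ, 0 < r → 0 ≤ ∫ x in ball 0 r, (a * f x + fderiv ℝ f x x) ∂μ) :
    MonotoneOn (fun r : ℝ => r ^ (a - finrank ℝ E) * ∫ x in ball 0 r, f x ∂μ) (Set.Ioi 0) := by
  -- Rescaling to the unit ball turns the function into `t ^ a * I t`, differentiable in `t`.
  set I : ℝ → ℝ := fun t => ∫ x in ball 0 1, f (t • x) ∂μ
  set I' : ℝ → ℝ := fun t => ∫ x in ball 0 1, fderiv ℝ f (t • x) x ∂μ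
  have hderiv (t : ℝ) (ht : 0 < t) :
      HasDerivAt (fun t : ℝ => t ^ a * I t) (a * t ^ (a - 1) * I t + t ^ a * I' t) t :=
    (Real.hasDerivAt_rpow_const (.inl ht.ne')).mul
      (hasDerivAt_setIntegral_ball_comp_smul hf 1 t)
  have hunit (t : ℝ) (ht : 0 < t) : 0 ≤ a * I t + t * I' t := by
    have hball := hnonneg t ht
    rw [setIntegral_ball_eq_pow_smul _ ht, smul_eq_mul] at hball
    have hcont : Continuous fun x => f (t • x) := hf.continuous.comp (continuous_const_smul t)
    have hcont' : Continuous fun x => fderiv ℝ f (t • x) x :=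
      ((hf.continuous_fderiv one_ne_zero).comp (continuous_const_smul t)).clm_apply continuous_id
    have hsplit : ∫ x in ball 0 1, (a * f (t • x) + fderiv ℝ f (t • x) (t • x)) ∂μ
        = a * I t + t * I' t := by
      simp only [map_smul, smul_eq_mul]
      rw [integral_add (integrableOn_ball_of_continuous (hcont.const_mul a) 0 1)
        (integrableOn_ball_of_continuous (hcont'.const_mul t) 0 1), integral_const_mul,
        integral_const_mul]
    exact hsplit ▸ nonneg_of_mul_nonneg_right hball (by positivity)
  have hmono : MonotoneOn (fun t : ℝ => t ^ a * I t) (Set.Ioi 0) := by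
    refine monotoneOn_of_deriv_nonneg (convex_Ioi 0)
      (fun t ht => (hderiv t ht).continuousAt.continuousWithinAt) ?_ ?_ <;>
    rw [interior_Ioi]
    · exact fun t ht => (hderiv t ht).differentiableAt.differentiableWithinAt
    · intro t (ht : 0 < t)
      calc 0 ≤ t ^ (a - 1) * (a * I t + t * I' t) := mul_nonneg (by positivity) (hunit t ht)
        _ = deriv (fun t : ℝ => t ^ a * I t) t := by
          rw [(hderiv t ht).deriv, Real.rpow_sub_one ht.ne']
          field_simp
  refine hmono.congr fun t (ht : 0 < t) => ?_
  rw [setIntegral_ball_eq_pow_smul f ht, Real.rpow_sub ht, Real.rpow_natCast, smul_eq_mul,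
    ← mul_assoc, div_mul_cancel₀ _ (by positivity)]

end Dilation

section NormPow

variable {E F : Type*} [NormedAddCommGroup E] [InnerProductSpace ℝ E] [NormedAddCommGroup F]
  [NormedSpace ℝ F] {q : ℝ}

theorem hasFDerivAt_norm_rpow_of_ne_zero (q : ℝ) {z : E} (hz : z ≠ 0) :
    HasFDerivAt (fun z : E => ‖z‖ ^ q) ((q * ‖z‖ ^ (q - 2)) • innerSL ℝ z) z := by
  apply HasStrictFDerivAt.hasFDerivAt
  convert! (hasStrictFDerivAt_norm_sq z).rpow_const (p := q / 2) (by simp [hz]) using 0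
  simp_rw [← Real.rpow_natCast_mul (norm_nonneg _), ← Nat.cast_smul_eq_nsmul ℝ, smul_smul]
  ring_nf

theorem norm_rpow_smul_bilin_le (hq : -1 < q) (B : E →L[ℝ] E →L[ℝ] F) (z : E) :
    ‖‖z‖ ^ q • B z z‖ ≤ ‖B‖ * ‖z‖ ^ (q + 1) * ‖z‖ := by
  rw [norm_smul, Real.norm_of_nonneg (by positivity),
    Real.rpow_add_one' (norm_nonneg z) (by linarith)]
  calc ‖z‖ ^ q * ‖B z z‖ ≤ ‖z‖ ^ q * (‖B‖ * ‖z‖ * ‖z‖) := by gcongr; exact B.le_opNorm₂ z z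
    _ = ‖B‖ * (‖z‖ ^ q * ‖z‖) * ‖z‖ := by ring

theorem tendsto_const_mul_norm_rpow_nhds_zero {G : Type*} [SeminormedAddCommGroup G] {a : ℝ}
    (ha : 0 < a) (C : ℝ) : Tendsto (fun z : G => C * ‖z‖ ^ a) (𝓝 0) (𝓝 0) := by
  have hcont : Continuous fun z : G => C * ‖z‖ ^ a :=
    continuous_const.mul (continuous_norm.rpow_const fun _ => .inr ha.le)
  simpa [Real.zero_rpow ha.ne'] using hcont.tendsto 0

theorem hasFDerivAt_norm_rpow_smul_bilin (hq : -1 < q) (B : E →L[ℝ] E →L[ℝ] F) (z : E) :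
    HasFDerivAt (fun z : E => ‖z‖ ^ q • B z z)
      (‖z‖ ^ q • (B z + B.flip z) + ((q * ‖z‖ ^ (q - 2)) • innerSL ℝ z).smulRight (B z z)) z := by
  rcases eq_or_ne z 0 with rfl | hz
  · rw [hasFDerivAt_iff_isLittleO_nhds_zero]
    have hlittle : (fun z : E => ‖B‖ * ‖z‖ ^ (q + 1)) =o[𝓝 0] fun _ => (1 : ℝ) :=
      (Asymptotics.isLittleO_one_iff ℝ).2
        (tendsto_const_mul_norm_rpow_nhds_zero (by linarith) ‖B‖)
    have hbig : (fun z : E => ‖z‖ ^ q • B z z) =O[𝓝 0] fun z => ‖B‖ * ‖z‖ ^ (q + 1) * ‖z‖ :=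
      .of_norm_le (norm_rpow_smul_bilin_le hq B)
    have hprod := hlittle.mul_isBigO (Asymptotics.isBigO_refl (fun z : E => ‖z‖) (𝓝 0))
    simpa using (hbig.trans_isLittleO (by simpa only [one_mul] using hprod)).of_norm_right
  · exact (hasFDerivAt_norm_rpow_of_ne_zero q hz).smul (B.hasFDerivAt.clm_apply (hasFDerivAt_id z))

theorem norm_fderiv_norm_rpow_smul_bilin_le (hq : -1 < q) (B : E →L[ℝ] E →L[ℝ] F) (z : E) :
    ‖fderiv ℝ (fun z : E => ‖z‖ ^ q • B z z) z‖ ≤ (2 + |q|) * ‖B‖ * ‖z‖ ^ (q + 1) := by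
  rw [(hasFDerivAt_norm_rpow_smul_bilin hq B z).fderiv]
  rcases eq_or_ne z 0 with rfl | hz
  · simp only [map_zero, add_zero, smul_zero, ContinuousLinearMap.smulRight_zero, norm_zero]
    positivity
  have hpow : ‖z‖ ^ (q - 2) * ‖z‖ ^ 2 = ‖z‖ ^ q := by
    rw [← Real.rpow_natCast, ← Real.rpow_add (norm_pos_iff.2 hz), Nat.cast_ofNat, sub_add_cancel]
  have hfirst : ‖‖z‖ ^ q • (B z + B.flip z)‖ ≤ ‖z‖ ^ q * (‖B‖ * ‖z‖ + ‖B‖ * ‖z‖) := by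
    rw [norm_smul, Real.norm_of_nonneg (by positivity)]
    gcongr
    exact norm_add_le_of_le (B.le_opNorm z) (B.opNorm_flip ▸ B.flip.le_opNorm z)
  have hsecond : ‖((q * ‖z‖ ^ (q - 2)) • innerSL ℝ z).smulRight (B z z)‖
      ≤ |q| * ‖z‖ ^ (q - 2) * ‖z‖ * (‖B‖ * ‖z‖ * ‖z‖) := by
    rw [ContinuousLinearMap.norm_smulRight_apply, norm_smul, norm_mul, Real.norm_eq_abs,
      Real.norm_of_nonneg (by positivity : 0 ≤ ‖z‖ ^ (q - 2)), innerSL_apply_norm]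
    gcongr
    exact B.le_opNorm₂ z z
  calc _ ≤ ‖z‖ ^ q * (‖B‖ * ‖z‖ + ‖B‖ * ‖z‖)
        + |q| * ‖z‖ ^ (q - 2) * ‖z‖ * (‖B‖ * ‖z‖ * ‖z‖) := norm_add_le_of_le hfirst hsecond
    _ = 2 * ‖B‖ * (‖z‖ ^ q * ‖z‖) + |q| * ‖B‖ * (‖z‖ ^ (q - 2) * ‖z‖ ^ 2 * ‖z‖) := by ring
    _ = (2 + |q|) * ‖B‖ * ‖z‖ ^ (q + 1) := by
      rw [hpow, Real.rpow_add_one' (norm_nonneg z) (by linarith)]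
      ring

theorem contDiff_norm_rpow_smul_bilin (hq : -1 < q) (B : E →L[ℝ] E →L[ℝ] F) :
    ContDiff ℝ 1 fun z : E => ‖z‖ ^ q • B z z := by
  rw [contDiff_one_iff_fderiv]
  refine ⟨fun z => (hasFDerivAt_norm_rpow_smul_bilin hq B z).differentiableAt,
    continuous_iff_continuousAt.2 fun z => ?_⟩
  rcases eq_or_ne z 0 with rfl | hz
  · have hzero : fderiv ℝ (fun z : E => ‖z‖ ^ q • B z z) 0 = 0 := by
      simpa using (hasFDerivAt_norm_rpow_smul_bilin hq B 0).fderiv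
    rw [ContinuousAt, hzero]
    exact squeeze_zero_norm (norm_fderiv_norm_rpow_smul_bilin_le hq B)
      (tendsto_const_mul_norm_rpow_nhds_zero (by linarith) _)
  · have hz_smooth : ContDiffAt ℝ 1 (fun z : E => ‖z‖ ^ q • B z z) z :=
      ((contDiffAt_norm ℝ hz).rpow_const_of_ne (norm_ne_zero_iff.2 hz)).smul
        (B.contDiff.clm_apply contDiff_id).contDiffAt
    exact hz_smooth.continuousAt_fderiv one_ne_zero

end NormPow

section Gradient

variable {E : Type*} [NormedAddCommGroup E] [InnerProductSpace ℝ E] [CompleteSpace E]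
  {u : E → ℝ} {x : E}

theorem contDiff_gradient {n : ℕ∞ω} (hu : ContDiff ℝ (n + 1) u) : ContDiff ℝ n (∇ u) :=
  (InnerProductSpace.toDual ℝ E).symm.contDiff.comp (hu.fderiv_right le_rfl)

theorem inner_fderiv_gradient_comm (hu : ContDiffAt ℝ 2 u x) (v w : E) :
    ⟪fderiv ℝ (∇ u) x v, w⟫ = ⟪fderiv ℝ (∇ u) x w, v⟫ := by
  have hinner (v w : E) : ⟪fderiv ℝ (∇ u) x v, w⟫ = fderiv ℝ (fderiv ℝ u) x v w := by
    have hcomp : fderiv ℝ (∇ u) x = _ :=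
      (InnerProductSpace.toDual ℝ E).symm.toContinuousLinearEquiv.comp_fderiv
    rw [hcomp]
    exact InnerProductSpace.toDual_symm_apply
  rw [hinner, hinner]
  exact hu.isSymmSndFDerivAt (by simp) v w

end Gradient

section PLaplacian

variable {E : Type*} [NormedAddCommGroup E] [InnerProductSpace ℝ E] [CompleteSpace E]
  {p : ℝ} {u : E → ℝ}

/-- The flux `|∇u|^{p-2} ∇u`, whose divergence is the `p`-Laplacian of `u`. -/
def pLaplacianFlux (p : ℝ) (u : E → ℝ) (x : E) : E :=
  ‖∇ u x‖ ^ (p - 2) • ∇ u x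

/-- The Pohozaev field `⟨∇u, x⟩ |∇u|^{p-2} ∇u`: the flux of the `p`-Laplacian multiplied by the
derivative of `u` along the generator `x` of dilations. -/
def pohozaevField (p : ℝ) (u : E → ℝ) (x : E) : E :=
  ⟪∇ u x, x⟫ • pLaplacianFlux p u x

theorem inner_pohozaevField_nonneg (p : ℝ) (u : E → ℝ) (x : E) :
    0 ≤ ⟪x, pohozaevField p u x⟫ := by
  rw [pohozaevField, pLaplacianFlux, real_inner_smul_right, real_inner_smul_right,
    real_inner_comm (∇ u x) x, mul_left_comm]
  exact mul_nonneg (by positivity) (mul_self_nonneg _)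

theorem pohozaevField_eq (p : ℝ) (u : E → ℝ) : pohozaevField p u = fun y =>
    (‖∇ u y‖ ^ (p - 2) • ((ContinuousLinearMap.smulRightL ℝ E E).comp (innerSL ℝ))
      (∇ u y) (∇ u y)) y :=
  funext fun _ => smul_comm _ _ _

theorem contDiff_pohozaevField (hp : 1 < p) (hu : ContDiff ℝ 2 u) :
    ContDiff ℝ 1 (pohozaevField p u) := by
  rw [pohozaevField_eq]
  exact ((contDiff_norm_rpow_smul_bilin (by linarith) _).comp
    (contDiff_gradient (n := 1) hu)).clm_apply contDiff_id

variable {x : E}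

theorem hasFDerivAt_pohozaevField_of_gradient_eq_zero (hp : 1 < p)
    (hu : DifferentiableAt ℝ (∇ u) x) (hx : ∇ u x = 0) :
    HasFDerivAt (pohozaevField p u) (0 : E →L[ℝ] E) x := by
  rw [pohozaevField_eq]
  have hpow := hasFDerivAt_norm_rpow_smul_bilin (q := p - 2) (by linarith)
    ((ContinuousLinearMap.smulRightL ℝ E E).comp (innerSL ℝ)) (∇ u x)
  refine ((hpow.comp x hu.hasFDerivAt).clm_apply (hasFDerivAt_id x)).congr_fderiv ?_
  ext v
  simp [hx]

theorem fderiv_norm_gradient_rpow_apply (hp : 1 < p) (hu : Differentiable ℝ (∇ u)) (v : E) :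
    fderiv ℝ (fun y => ‖∇ u y‖ ^ p) x v = p * ⟪fderiv ℝ (∇ u) x v, pLaplacianFlux p u x⟫ := by
  rw [hu.fderiv_norm_rpow hp, pLaplacianFlux, real_inner_smul_right, real_inner_comm]
  simp [mul_assoc]

theorem divergence_pohozaevField [FiniteDimensional ℝ E] (hp : 1 < p) (hu : ContDiff ℝ 2 u) :
    divergence (pohozaevField p u) x = ⟪∇ u x, x⟫ * divergence (pLaplacianFlux p u) x
      + ‖∇ u x‖ ^ p + fderiv ℝ (fun y => ‖∇ u y‖ ^ p) x x / p := by
  have hg : Differentiable ℝ (∇ u) := (contDiff_gradient (n := 1) hu).differentiable one_ne_zero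
  have hp0 : p ≠ 0 := by linarith
  rw [fderiv_norm_gradient_rpow_apply hp hg, mul_div_cancel_left₀ _ hp0]
  rcases eq_or_ne (∇ u x) 0 with hx | hx
  · rw [divergence, (hasFDerivAt_pohozaevField_of_gradient_eq_zero hp (hg x) hx).fderiv]
    simp [pLaplacianFlux, hx, hp0]
  have hflux : DifferentiableAt ℝ (pLaplacianFlux p u) x :=
    (((hg x).norm ℝ hx).rpow_const (.inl (norm_ne_zero_iff.2 hx))).smul (hg x)
  have hinner : ⟪∇ u x, pLaplacianFlux p u x⟫ = ‖∇ u x‖ ^ p := by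
    rw [pLaplacianFlux, real_inner_smul_right, real_inner_self_eq_norm_sq, ← Real.rpow_natCast,
      ← Real.rpow_add (norm_pos_iff.2 hx), Nat.cast_ofNat, sub_add_cancel]
  calc divergence (pohozaevField p u) x
      = ⟪∇ u x, x⟫ * divergence (pLaplacianFlux p u) x
        + fderiv ℝ (fun y => ⟪∇ u y, y⟫) x (pLaplacianFlux p u x) :=
      divergence_fun_smul ((hg x).inner ℝ differentiableAt_id) hflux
    _ = ⟪∇ u x, x⟫ * divergence (pLaplacianFlux p u) x
        + (⟪∇ u x, pLaplacianFlux p u x⟫ + ⟪fderiv ℝ (∇ u) x (pLaplacianFlux p u x), x⟫) := by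
      rw [fderiv_inner_apply ℝ (hg x) differentiableAt_fun_id]
      simp
    _ = _ := by
      rw [hinner, inner_fderiv_gradient_comm hu.contDiffAt _ x, add_assoc]

end PLaplacian

section System

variable {E ι : Type*} [NormedAddCommGroup E] [InnerProductSpace ℝ E] [CompleteSpace E]
  [Fintype ι] {p : ℝ} {P : (ι → ℝ) → ℝ} {u : ι → E → ℝ} {x : E}

/-- Twice the energy density of the system with potential `P`: the integrand of `I_α`, where `P` is
the `H̃` of the paper. -/
def energyDensity (p : ℝ) (P : (ι → ℝ) → ℝ) (u : ι → E → ℝ) (x : E) : ℝ :=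
  (∑ i, (2 / p) * ‖∇ (u i) x‖ ^ p) - 2 * P (fun j => u j x)

theorem contDiff_norm_gradient_rpow {v : E → ℝ} (hp : 1 < p) (hv : ContDiff ℝ 2 v) :
    ContDiff ℝ 1 fun x => ‖∇ v x‖ ^ p :=
  (contDiff_gradient (n := 1) hv).norm_rpow hp

theorem contDiff_energyDensity (hp : 1 < p) (hP : ContDiff ℝ 1 P) (hu : ∀ i, ContDiff ℝ 2 (u i)) :
    ContDiff ℝ 1 (energyDensity p P u) :=
  (ContDiff.sum fun i _ => contDiff_const.mul (contDiff_norm_gradient_rpow hp (hu i))).sub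
    (contDiff_const.mul (hP.comp (contDiff_pi.2 fun i => (hu i).of_le one_le_two)))

theorem energyDensity_nonneg (hp : 0 ≤ p) (hP : P (fun j => u j x) ≤ 0) :
    0 ≤ energyDensity p P u x := by
  have hgrad : 0 ≤ ∑ i, (2 / p) * ‖∇ (u i) x‖ ^ p := sum_nonneg fun i _ => by positivity
  rw [energyDensity]
  linarith

theorem fderiv_comp_pi_apply [DecidableEq ι] (hP : DifferentiableAt ℝ P (fun j => u j x))
    (hu : ∀ i, DifferentiableAt ℝ (u i) x) (v : E) :
    fderiv ℝ (fun y => P (fun j => u j y)) x v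
      = ∑ i, ⟪∇ (u i) x, v⟫ * fderiv ℝ P (fun j => u j x) (Pi.single i 1) := by
  have hchain : HasFDerivAt (fun y => P (fun j => u j y)) _ x :=
    hP.hasFDerivAt.comp x (hasFDerivAt_pi.2 fun i => (hu i).hasFDerivAt)
  rw [hchain.fderiv, ContinuousLinearMap.comp_apply, ← ContinuousLinearMap.coe_coe (fderiv ℝ P _),
    LinearMap.pi_apply_eq_sum_univ]
  refine sum_congr rfl fun i _ => ?_
  rw [inner_gradient_left]
  congr 2
  ext j
  simp [Pi.single_apply, eq_comm]

theorem fderiv_energyDensity_apply [DecidableEq ι] (hp : 1 < p) (hP : ContDiff ℝ 1 P)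
    (hu : ∀ i, ContDiff ℝ 2 (u i)) (v : E) :
    fderiv ℝ (energyDensity p P u) x v
      = ∑ i, (2 / p) * fderiv ℝ (fun y => ‖∇ (u i) y‖ ^ p) x v
        - 2 * ∑ i, ⟪∇ (u i) x, v⟫ * fderiv ℝ P (fun j => u j x) (Pi.single i 1) := by
  have hgrad i : HasFDerivAt (fun y => ‖∇ (u i) y‖ ^ p) _ x :=
    ((contDiff_norm_gradient_rpow hp (hu i)).differentiable one_ne_zero x).hasFDerivAt
  have hpot : DifferentiableAt ℝ (fun y => P (fun j => u j y)) x :=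
    (hP.comp (contDiff_pi.2 fun i => (hu i).of_le one_le_two)).differentiable one_ne_zero x
  have henergy : HasFDerivAt (energyDensity p P u) _ x :=
    (HasFDerivAt.fun_sum fun i _ => (hgrad i).const_mul (2 / p)).sub (hpot.hasFDerivAt.const_mul 2)
  rw [henergy.fderiv, ← fderiv_comp_pi_apply (hP.differentiable one_ne_zero _)
    fun i => (hu i).differentiable two_ne_zero x]
  simp

theorem two_mul_divergence_sum_pohozaevField [FiniteDimensional ℝ E] [DecidableEq ι] (hp : 1 < p)
    (hP : ContDiff ℝ 1 P) (hu : ∀ i, ContDiff ℝ 2 (u i))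
    (hsol : ∀ i, ∇ (u i) x ≠ 0 → -divergence (pLaplacianFlux p (u i)) x
      = fderiv ℝ P (fun j => u j x) (Pi.single i 1)) :
    2 * divergence (fun y => ∑ i, pohozaevField p (u i) y) x
      = p * energyDensity p P u x + fderiv ℝ (energyDensity p P u) x x
        + 2 * p * P (fun j => u j x) := by
  have hp0 : p ≠ 0 := by linarith
  have hflux i : ⟪∇ (u i) x, x⟫ * divergence (pLaplacianFlux p (u i)) x
      = -(⟪∇ (u i) x, x⟫ * fderiv ℝ P (fun j => u j x) (Pi.single i 1)) := by
    rcases eq_or_ne (∇ (u i) x) 0 with hx | hx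
    · simp [hx]
    · rw [← hsol i hx, mul_neg, neg_neg]
  rw [divergence_fun_sum fun i _ =>
    (contDiff_pohozaevField hp (hu i)).differentiable one_ne_zero x]
  simp only [divergence_pohozaevField hp (hu _), hflux, fderiv_energyDensity_apply hp hP hu,
    energyDensity, sum_add_distrib, sum_neg_distrib, ← mul_sum, ← sum_div]
  field_simp
  ring

variable [FiniteDimensional ℝ E] [MeasurableSpace E] [BorelSpace E] [DecidableEq ι]

theorem weak_monotonicity_pLaplacian_general {μ : Measure E} [μ.IsAddHaarMeasure] (hp : 1 < p)
    (hP : ContDiff ℝ 1 P) (hu : ∀ i, ContDiff ℝ 2 (u i))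
    (hsol : ∀ i x, ∇ (u i) x ≠ 0 → -divergence (pLaplacianFlux p (u i)) x
      = fderiv ℝ P (fun j => u j x) (Pi.single i 1))
    (hPneg : ∀ x, P (fun j => u j x) ≤ 0) {α : ℝ} (hα : p ≤ α) :
    MonotoneOn (fun r : ℝ => r ^ (α - finrank ℝ E) * ∫ x in ball 0 r, energyDensity p P u x ∂μ)
      (Set.Ioi 0) := by
  have he : ContDiff ℝ 1 (energyDensity p P u) := contDiff_energyDensity hp hP hu
  refine monotoneOn_rpow_mul_setIntegral_ball he fun r hr => ?_
  set V : E → E := fun y => ∑ i, pohozaevField p (u i) y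
  have hV : ContDiff ℝ 1 V := ContDiff.sum fun i _ => contDiff_pohozaevField hp (hu i)
  have hout x : 0 ≤ ⟪x, V x⟫ := by
    rw [inner_sum]
    exact sum_nonneg fun i _ => inner_pohozaevField_nonneg p (u i) x
  have hle x : 2 * divergence V x ≤ α * energyDensity p P u x
      + fderiv ℝ (energyDensity p P u) x x := by
    rw [two_mul_divergence_sum_pohozaevField hp hP hu fun i => hsol i x]
    have henergy : p * energyDensity p P u x ≤ α * energyDensity p P u x :=
      mul_le_mul_of_nonneg_right hα (energyDensity_nonneg (by linarith) (hPneg x))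
    have hpot : p * P (fun j => u j x) ≤ 0 :=
      mul_nonpos_of_nonneg_of_nonpos (by linarith) (hPneg x)
    linarith
  calc 0 ≤ 2 * ∫ x in ball 0 r, divergence V x ∂μ :=
        mul_nonneg zero_le_two (setIntegral_divergence_ball_nonneg hV hout hr.le)
    _ = ∫ x in ball 0 r, 2 * divergence V x ∂μ := (integral_const_mul _ _).symm
    _ ≤ _ := setIntegral_mono
      (integrableOn_ball_of_continuous ((continuous_divergence hV).const_mul 2) 0 r)
      (integrableOn_ball_of_continuous ((he.continuous.const_mul α).add
        ((he.continuous_fderiv one_ne_zero).clm_apply continuous_id)) 0 r) hle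

end System

/-- **Weak monotonicity formula for the p-Laplacian system**:
for a solution of `-div(|∇uᵢ|^{p-2}∇uᵢ) = Hᵢ(u)` with `H̃(u) ≤ 0` and `α ≥ p`,
the function `I_α(r) = r^{α-n} ∫_{B_r} (∑ᵢ (2/p)|∇uᵢ|^p - 2H̃(u))`
is nondecreasing in `r`. -/
theorem weak_monotonicity_pLaplacian
    (n m : ℕ) (hn : 1 ≤ n) (hm : 2 ≤ m) (p : ℝ) (hp : 1 < p)
    (H : Fin m → (Fin m → ℝ) → ℝ) (hH : ∀ i, ContDiff ℝ 1 (H i))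
    (Ht : (Fin m → ℝ) → ℝ) (hHt : ContDiff ℝ 2 Ht)
    (hHtgrad : ∀ i y, fderiv ℝ Ht y (Pi.single i 1) = H i y)
    (u : Fin m → EuclideanSpace ℝ (Fin n) → ℝ)
    (hu : ∀ i, ContDiff ℝ 2 (u i))
    (hsol : ∀ i x, -vdiv (fun y =>
        ‖gradient (u i) y‖ ^ (p - 2) • gradient (u i) y) x
        = H i (fun j => u j x))
    (hHneg : ∀ x : EuclideanSpace ℝ (Fin n), Ht (fun j => u j x) ≤ 0)
    (α : ℝ) (hα : p ≤ α) :
    ∀ r₁ r₂ : ℝ, 0 < r₁ → r₁ ≤ r₂ →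
      r₁ ^ (α - (n : ℝ)) * (∫ x in ball (0 : EuclideanSpace ℝ (Fin n)) r₁,
          ((∑ i, (2 / p) * ‖gradient (u i) x‖ ^ p) - 2 * Ht (fun j => u j x)))
        ≤ r₂ ^ (α - (n : ℝ)) * (∫ x in ball (0 : EuclideanSpace ℝ (Fin n)) r₂,
          ((∑ i, (2 / p) * ‖gradient (u i) x‖ ^ p) - 2 * Ht (fun j => u j x))) := by
  intro r₁ r₂ hr₁ hr
  have hsystem i x : ∇ (u i) x ≠ 0 → -divergence (pLaplacianFlux p (u i)) x
      = fderiv ℝ Ht (fun j => u j x) (Pi.single i 1) := fun _ => by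
    rw [hHtgrad, ← hsol, vdiv_eq_divergence]
    rfl
  have hmono := weak_monotonicity_pLaplacian_general (μ := volume) hp (hHt.of_le one_le_two) hu
    hsystem hHneg hα hr₁ (hr₁.trans_le hr) hr
  simpa only [finrank_euclideanSpace_fin, energyDensity] using hmono
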